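/- (Desai–Roy bound on the smallest eigenvalue.) Let G be a D-regular simple graph on N vertices with D ≥ 1, and let λ₁ ≥ λ₂ ≥ … ≥ λ_N be the eigenvalues of its adjacency matrix. For a nonempty vertex subset U, let b(U) be the minimum number of edges that must be removed from the induced subgraph G[U] to make it bipartite, and let e(U, Uᶜ) be the number of edges with exactly one endpoint in U. Set Ψ = min over all nonempty U ⊆ V(G) of (b(U) + e(U, Uᶜ))/|U|. Then λ_N ≥ −D + Ψ²/(4D). -/

import Mathlib

open scoped Matrix

/-- The Euclidean (ℓ²) norm of a finitely-supported real vector. -/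
noncomputable def l2norm {α : Type*} [Fintype α] (v : α → ℝ) : ℝ :=
  Real.sqrt (∑ x, v x ^ 2)

open Classical in
/-- The (real) adjacency matrix of a graph. -/
noncomputable def adjMat {α : Type*} [Fintype α] (G : SimpleGraph α) : Matrix α α ℝ :=
  fun x y => if G.Adj x y then 1 else 0

/-- For a regular graph, `λ(G) ≤ lam` (all eigenvalues other than the largest are
at most `lam` in absolute value) is equivalent to the adjacency operator contracting
by a factor `lam` on the space of mean-zero vectors. -/
def eigBound {α : Type*} [Fintype α] (G : SimpleGraph α) (lam : ℝ) : Prop :=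
  ∀ v : α → ℝ, (∑ x, v x) = 0 → l2norm (adjMat G *ᵥ v) ≤ lam * l2norm v

lemma adjMat_isHermitian {α : Type*} [Fintype α] (G : SimpleGraph α) :
    (adjMat G).IsHermitian := by
  unfold Matrix.IsHermitian
  ext x y
  by_cases h : G.Adj x y
  · simp [adjMat, Matrix.conjTranspose_apply, h, h.symm]
  · have h' : ¬ G.Adj y x := fun hyx => h hyx.symm
    simp [adjMat, Matrix.conjTranspose_apply, h, h']

open Classical in
/-- The number of edges of `G` with one endpoint in `U` and the other in `Uᶜ`. -/
noncomputable def cutCount {α : Type*} [Fintype α] [DecidableEq α]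
    (G : SimpleGraph α) (U : Finset α) : ℕ :=
  ∑ x ∈ U, ∑ y ∈ Uᶜ, if G.Adj x y then 1 else 0

/-- `H` can be made bipartite by removing `k` of its edges. -/
def bipartiteAfter {β : Type*} (H : SimpleGraph β) (k : ℕ) : Prop :=
  ∃ Del : Set (Sym2 β), Del ⊆ H.edgeSet ∧ Del.ncard = k ∧ (H.deleteEdges Del).Colorable 2

lemma step_integral {ι κ : Type*} [Fintype ι] [Fintype κ] (c a : ι → ℝ) (d m : κ → ℝ)
    (ha : ∀ i, 0 ≤ a i) (hm : ∀ i, 0 ≤ m i)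
    (h : ∀ t : ℝ, 0 ≤ t → 0 ≤ ∑ i, c i * (if t < a i then 1 else 0)
        + ∑ k, d k * (if t < m k then 1 else 0)) :
    0 ≤ ∑ i, c i * a i + ∑ k, d k * m k := by
  obtain ⟨M, hM0, hMa, hMm⟩ : ∃ M : ℝ, 0 ≤ M ∧ (∀ i, a i ≤ M) ∧ (∀ k, m k ≤ M) := by
    refine ⟨∑ i, a i + ∑ k, m k, ?_, ?_, ?_⟩
    · exact add_nonneg (Finset.sum_nonneg fun i _ => ha i) (Finset.sum_nonneg fun i _ => hm i)
    · intro i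
      have h1 := Finset.single_le_sum (f := a) (fun i _ => ha i) (Finset.mem_univ i)
      have h2 : 0 ≤ ∑ k, m k := Finset.sum_nonneg fun i _ => hm i
      linarith
    · intro i
      have h1 := Finset.single_le_sum (f := m) (fun i _ => hm i) (Finset.mem_univ i)
      have h2 : 0 ≤ ∑ k, a k := Finset.sum_nonneg fun i _ => ha i
      linarith
  have hint : ∀ z : ℝ, IntervalIntegrable (fun t : ℝ => if t < z then (1:ℝ) else 0)
      MeasureTheory.volume 0 M := by
    intro z
    apply AntitoneOn.intervalIntegrable
    intro s _ t _ hst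
    dsimp only
    split_ifs <;> first | linarith | norm_num
  have hval : ∀ z : ℝ, 0 ≤ z → z ≤ M → ∫ t in (0:ℝ)..M, (if t < z then (1:ℝ) else 0) = z := by
    intro z hz hzM
    have hi1 : IntervalIntegrable (fun t : ℝ => if t < z then (1:ℝ) else 0)
      MeasureTheory.volume 0 z := by
      apply AntitoneOn.intervalIntegrable
      intro s _ t _ hst
      dsimp only
      split_ifs <;> first | linarith | norm_num
    have hi2 : IntervalIntegrable (fun t : ℝ => if t < z then (1:ℝ) else 0)
      MeasureTheory.volume z M := by
      apply AntitoneOn.intervalIntegrable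
      intro s _ t _ hst
      dsimp only
      split_ifs <;> first | linarith | norm_num
    rw [← intervalIntegral.integral_add_adjacent_intervals hi1 hi2]
    have e1 : ∫ t in (0:ℝ)..z, (if t < z then (1:ℝ) else 0) = ∫ t in (0:ℝ)..z, (1:ℝ) := by
      rw [intervalIntegral.integral_of_le hz, intervalIntegral.integral_of_le hz,
        MeasureTheory.integral_Ioc_eq_integral_Ioo, MeasureTheory.integral_Ioc_eq_integral_Ioo]
      apply MeasureTheory.setIntegral_congr_fun measurableSet_Ioo
      intro t ht
      simp [ht.2]
    have e2 : ∫ t in z..M, (if t < z then (1:ℝ) else 0) = ∫ t in z..M, (0:ℝ) := by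
      apply intervalIntegral.integral_congr
      intro t ht
      rw [Set.uIcc_of_le hzM] at ht
      simp [ht.1]
    rw [e1, e2]; simp
  have key : 0 ≤ ∫ t in (0:ℝ)..M, (∑ i, c i * (if t < a i then (1:ℝ) else 0)
        + ∑ k, d k * (if t < m k then (1:ℝ) else 0)) :=
    intervalIntegral.integral_nonneg hM0 (fun t ht => h t ht.1)
  rw [intervalIntegral.integral_add, intervalIntegral.integral_finsetSum,
    intervalIntegral.integral_finsetSum] at key
  · simp_rw [intervalIntegral.integral_const_mul] at key
    convert key using 2
    · exact Finset.sum_congr rfl fun i _ => by rw [hval _ (ha i) (hMa i)]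
    · exact Finset.sum_congr rfl fun i _ => by rw [hval _ (hm i) (hMm i)]
  · exact fun i _ => (hint _).const_mul _
  · exact fun i _ => (hint _).const_mul _
  · have := IntervalIntegrable.sum Finset.univ (fun i _ => (hint (a i)).const_mul (c i))
    rw [Finset.sum_fn] at this
    exact this
  · have := IntervalIntegrable.sum Finset.univ (fun i _ => (hint (m i)).const_mul (d i))
    rw [Finset.sum_fn] at this
    exact this

open Classical in
lemma bip_bound {α : Type*} [Fintype α] (G : SimpleGraph α) (U : Finset α) (c : α → Bool) (k : ℕ)
    (hk : IsLeast {k : ℕ | bipartiteAfter (G.induce (↑U : Set α)) k} k) :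
    2 * (k : ℝ) ≤ ∑ u ∈ U, ∑ v ∈ U, adjMat G u v * (if c u = c v then 1 else 0) := by
  let H : SimpleGraph (↑U : Set α) :=
    { Adj := fun u v => G.Adj u v ∧ c u = c v
      symm := ⟨fun u v h => ⟨h.1.symm, h.2.symm⟩⟩
      loopless := ⟨fun u h => G.loopless.irrefl _ h.1⟩ }
  have h1 : k ≤ H.edgeSet.ncard := by
    apply hk.2
    refine ⟨H.edgeSet, ?_, rfl, ?_⟩
    · rw [SimpleGraph.edgeSet_subset_edgeSet]
      intro u v h
      exact h.1
    · have col : ((G.induce (↑U : Set α)).deleteEdges H.edgeSet).Coloring Bool :=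
        SimpleGraph.Coloring.mk (fun u => c u) (by
          intro u v h
          rw [SimpleGraph.deleteEdges_adj] at h
          intro hc
          exact h.2 ⟨h.1, hc⟩)
      simpa using col.colorable
  have h2 := H.sum_degrees_eq_twice_card_edges
  have h3 : H.edgeSet.ncard = H.edgeFinset.card := by
    rw [Set.ncard_eq_toFinset_card']; rfl
  have h4 : ∑ u ∈ U, ∑ v ∈ U, adjMat G u v * (if c u = c v then 1 else 0)
      = ((∑ v, H.degree v : ℕ) : ℝ) := by
    push_cast
    rw [← Finset.sum_coe_sort U]
    refine Finset.sum_congr rfl fun u _ => ?_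
    rw [← Finset.sum_coe_sort U, ← SimpleGraph.card_neighborFinset_eq_degree,
      SimpleGraph.neighborFinset_eq_filter, Finset.card_filter]
    push_cast
    refine Finset.sum_congr rfl fun v _ => ?_
    simp only [adjMat, H]
    split_ifs <;> simp_all
  have h5 : 2 * k ≤ ∑ v, H.degree v := by
    rw [h2]
    exact Nat.mul_le_mul_left 2 (h1.trans h3.le)
  rw [h4]
  exact_mod_cast h5

lemma row_sum {α : Type*} [Fintype α] (G : SimpleGraph α) (D : ℕ)
    (hreg : ∀ x : α, (G.neighborSet x).ncard = D) (u : α) : ∑ v, adjMat G u v = D := by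
  classical
  rw [← hreg u, Set.ncard_eq_toFinset_card']
  simp only [adjMat, Finset.sum_boole]
  congr 2
  ext v
  simp

lemma adjMat_symm {α : Type*} [Fintype α] (G : SimpleGraph α) (u v : α) :
    adjMat G u v = adjMat G v u := by
  have := G.adj_comm u v
  unfold adjMat
  split_ifs <;> simp_all

lemma adjMat_cases {α : Type*} [Fintype α] (G : SimpleGraph α) (u v : α) :
    adjMat G u v = 0 ∨ adjMat G u v = 1 := by
  unfold adjMat
  split_ifs <;> simp

lemma point_ineq {α : Type*} [Fintype α] [DecidableEq α]
    (G : SimpleGraph α) (D : ℕ)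
    (hreg : ∀ x : α, (G.neighborSet x).ncard = D)
    (b : Finset α → ℕ)
    (hb : ∀ U : Finset α, IsLeast {k : ℕ | bipartiteAfter (G.induce (↑U : Set α)) k} (b U))
    (Ψ : ℝ)
    (hΨ : IsLeast {r : ℝ | ∃ U : Finset α, U.Nonempty ∧
            r = ((b U : ℝ) + cutCount G U) / U.card} Ψ) (U : Finset α) (c : α → Bool) :
    0 ≤ (D - Ψ) * U.card +
      ∑ u ∈ U, ∑ v ∈ U, adjMat G u v * ((if c u = c v then 1 else 0) / 2 - 1) := by
  rcases U.eq_empty_or_nonempty with rfl | hU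
  · simp
  have h1 := hΨ.2 ⟨U, hU, rfl⟩
  have hc : (0:ℝ) < U.card := by exact_mod_cast hU.card_pos
  rw [le_div_iff₀ hc] at h1
  have h2 := bip_bound G U c _ (hb U)
  have h3 : (cutCount G U : ℝ) = D * U.card - ∑ u ∈ U, ∑ v ∈ U, adjMat G u v := by
    have : (cutCount G U : ℝ) = ∑ u ∈ U, ∑ v ∈ Uᶜ, adjMat G u v := by
      unfold cutCount adjMat
      push_cast
      rfl
    rw [this, eq_sub_iff_add_eq, ← Finset.sum_add_distrib]
    rw [Finset.sum_congr rfl (g := fun _ => (D:ℝ))]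
    · simp [mul_comm]
    · intro u _
      rw [add_comm, Finset.sum_add_sum_compl, row_sum G D hreg]
  have h4 : ∑ u ∈ U, ∑ v ∈ U, adjMat G u v * ((if c u = c v then 1 else 0) / 2 - 1)
     = (∑ u ∈ U, ∑ v ∈ U, adjMat G u v * (if c u = c v then 1 else 0)) / 2
       - ∑ u ∈ U, ∑ v ∈ U, adjMat G u v := by
    simp_rw [Finset.sum_div, ← Finset.sum_sub_distrib]
    refine Finset.sum_congr rfl fun u _ => Finset.sum_congr rfl fun v _ => ?_
    ring
  rw [h4]
  linarith

lemma F_bound (x y : ℝ) :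
    (if decide (0 ≤ x) = decide (0 ≤ y) then (1:ℝ) else 0) * min (x^2) (y^2) + x^2 + y^2
      - 2 * min (x^2) (y^2) ≤ |x + y| * (|x| + |y|) := by
  have hx := sq_abs x
  have hy := sq_abs y
  have h0 := abs_nonneg x
  have h0' := abs_nonneg y
  by_cases h : decide (0 ≤ x) = decide (0 ≤ y)
  · rw [if_pos h]
    have h' : 0 ≤ x ↔ 0 ≤ y := by simpa using h
    have : |x + y| = |x| + |y| := by
      rw [abs_add_eq_add_abs_iff]
      by_cases hx0 : 0 ≤ x
      · exact Or.inl ⟨hx0, h'.1 hx0⟩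
      · exact Or.inr ⟨by linarith, by have := mt h'.2 hx0; linarith⟩
    rw [this]
    have : 0 ≤ min (x^2) (y^2) := by positivity
    nlinarith [mul_nonneg h0 h0']
  · rw [if_neg h]
    have : |x + y| = |(|x| - |y|)| := by
      have h' : ¬ (0 ≤ x ↔ 0 ≤ y) := by simpa using h
      by_cases hx0 : 0 ≤ x
      · have hy0 : y ≤ 0 := by
          by_contra hh
          exact h' ⟨fun _ => by linarith, fun _ => hx0⟩
        rw [abs_of_nonneg hx0, abs_of_nonpos hy0]; congr 1; ring
      · have hy0 : 0 ≤ y := by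
          by_contra hh
          exact h' ⟨fun h => absurd h hx0, fun h => absurd h hh⟩
        rw [abs_of_nonneg hy0, abs_of_nonpos (by linarith : x ≤ 0), ← abs_neg]; congr 1; ring
    rw [this]
    rcases le_total (|x|) (|y|) with hxy | hxy
    · rw [abs_of_nonpos (by linarith), min_eq_left (sq_le_sq.2 hxy)]
      nlinarith
    · rw [abs_of_nonneg (by linarith), min_eq_right (sq_le_sq.2 hxy)]
      nlinarith

lemma eig_bound {α : Type*} [Fintype α] [DecidableEq α]
    (G : SimpleGraph α) (D : ℕ) (hD : 1 ≤ D)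
    (hreg : ∀ x : α, (G.neighborSet x).ncard = D)
    (b : Finset α → ℕ)
    (hb : ∀ U : Finset α, IsLeast {k : ℕ | bipartiteAfter (G.induce (↑U : Set α)) k} (b U))
    (Ψ : ℝ)
    (hΨ : IsLeast {r : ℝ | ∃ U : Finset α, U.Nonempty ∧
            r = ((b U : ℝ) + cutCount G U) / U.card} Ψ)
    (x : α → ℝ) (l : ℝ) (hx : x ≠ 0) (hl : adjMat G *ᵥ x = l • x) :
    -(D : ℝ) + Ψ ^ 2 / (4 * D) ≤ l := by
  have hΨ0 : 0 ≤ Ψ := by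
    obtain ⟨U, _, hr⟩ := hΨ.1
    rw [hr]; positivity
  have hDpos : (0:ℝ) < D := by exact_mod_cast hD
  set S : ℝ := ∑ u, x u ^ 2 with hS
  have hSpos : 0 < S := by
    obtain ⟨u, hu⟩ := Function.ne_iff.1 hx
    exact Finset.sum_pos' (fun i _ => sq_nonneg _) ⟨u, Finset.mem_univ u, by
      have : x u ≠ 0 := hu
      positivity⟩
  let c : α → Bool := fun u => decide (0 ≤ x u)
  have step := step_integral (fun _ : α => (D:ℝ) - Ψ) (fun u => x u ^ 2)
    (fun p : α × α => adjMat G p.1 p.2 * ((if c p.1 = c p.2 then 1 else 0) / 2 - 1))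
    (fun p => min (x p.1 ^ 2) (x p.2 ^ 2)) (fun u => sq_nonneg _) (fun p => by positivity) (by
      intro t ht
      have := point_ineq G D hreg b hb Ψ hΨ (Finset.univ.filter fun u => t < x u ^ 2) c
      convert this using 2
      · rw [← Finset.mul_sum, Finset.sum_boole]
      · rw [Fintype.sum_prod_type, Finset.sum_filter]
        refine Finset.sum_congr rfl fun u _ => ?_
        rw [Finset.sum_filter]
        split_ifs with h
        · refine Finset.sum_congr rfl fun v _ => ?_
          simp [lt_min_iff, h]
        · simp [lt_min_iff, h])
  rw [← Finset.mul_sum, Fintype.sum_prod_type] at step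
  simp only at step
  have r1 : ∑ u, ∑ v, adjMat G u v * x u ^ 2 = D * S := by
    simp_rw [← Finset.sum_mul, row_sum G D hreg, ← Finset.mul_sum, hS]
  have r2 : ∑ u, ∑ v, adjMat G u v * x v ^ 2 = D * S := by
    rw [Finset.sum_comm, ← r1]
    exact Finset.sum_congr rfl fun u _ => Finset.sum_congr rfl fun v _ => by rw [adjMat_symm]
  have r3 : ∑ u, ∑ v, adjMat G u v * (x u * x v) = l * S := by
    rw [hS, Finset.mul_sum]
    refine Finset.sum_congr rfl fun u _ => ?_
    have := congrFun hl u
    simp only [Matrix.mulVec, dotProduct, Pi.smul_apply, smul_eq_mul] at this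
    calc _ = x u * ∑ v, adjMat G u v * x v := by
          rw [Finset.mul_sum]; exact Finset.sum_congr rfl fun v _ => by ring
      _ = _ := by rw [this]; ring
  have hF : 2 * (Ψ * S) ≤ ∑ u, ∑ v, adjMat G u v * (|x u + x v| * (|x u| + |x v|)) := by
    have : ∑ u, ∑ v, (2 * (adjMat G u v * ((if c u = c v then 1 else 0) / 2 - 1) *
        min (x u ^ 2) (x v ^ 2)) + adjMat G u v * x u ^ 2 + adjMat G u v * x v ^ 2)
        ≤ ∑ u, ∑ v, adjMat G u v * (|x u + x v| * (|x u| + |x v|)) := by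
      refine Finset.sum_le_sum fun u _ => Finset.sum_le_sum fun v _ => ?_
      have hf := F_bound (x u) (x v)
      rcases adjMat_cases G u v with h | h
      · simp [h]
      · rw [h]; simp only [c]; linarith
    simp_rw [Finset.sum_add_distrib, ← Finset.mul_sum] at this
    rw [r1, r2] at this
    linarith
  have q1 : ∑ u, ∑ v, (adjMat G u v * |x u + x v|) ^ 2 = 2 * (D + l) * S := by
    calc _ = ∑ u, ∑ v, (adjMat G u v * x u ^ 2 + adjMat G u v * x v ^ 2
            + 2 * (adjMat G u v * (x u * x v))) := by
          refine Finset.sum_congr rfl fun u _ => Finset.sum_congr rfl fun v _ => ?_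
          rw [mul_pow, sq_abs]
          rcases adjMat_cases G u v with h | h <;> rw [h] <;> ring
      _ = _ := by
          simp_rw [Finset.sum_add_distrib, ← Finset.mul_sum]
          rw [r1, r2, r3]; ring
  have q2 : ∑ u, ∑ v, (adjMat G u v * (|x u| + |x v|)) ^ 2 ≤ 4 * D * S := by
    calc _ ≤ ∑ u, ∑ v, (2 * (adjMat G u v * x u ^ 2) + 2 * (adjMat G u v * x v ^ 2)) := by
          refine Finset.sum_le_sum fun u _ => Finset.sum_le_sum fun v _ => ?_
          rw [← sq_abs (x u), ← sq_abs (x v)]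
          rcases adjMat_cases G u v with h | h <;> rw [h]
          · simp
          · nlinarith [sq_nonneg (|x u| - |x v|)]
      _ = _ := by
          simp_rw [Finset.sum_add_distrib, ← Finset.mul_sum]
          rw [r1, r2]; ring
  have cs := Finset.sum_mul_sq_le_sq_mul_sq (Finset.univ : Finset (α × α))
    (fun p => adjMat G p.1 p.2 * |x p.1 + x p.2|) (fun p => adjMat G p.1 p.2 * (|x p.1| + |x p.2|))
  simp_rw [Fintype.sum_prod_type] at cs
  have e0 : ∑ u, ∑ v, adjMat G u v * |x u + x v| * (adjMat G u v * (|x u| + |x v|))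
      = ∑ u, ∑ v, adjMat G u v * (|x u + x v| * (|x u| + |x v|)) := by
    refine Finset.sum_congr rfl fun u _ => Finset.sum_congr rfl fun v _ => ?_
    rcases adjMat_cases G u v with h | h <;> rw [h] <;> ring
  rw [e0, q1] at cs
  have hq0 : 0 ≤ 2 * (D + l) * S := by
    rw [← q1]; positivity
  have hDl : 0 ≤ D + l := by
    by_contra hh
    nlinarith
  have f1 : (2 * (Ψ * S)) ^ 2 ≤ 2 * (D + l) * S * (4 * D * S) :=
    (pow_le_pow_left₀ (by positivity) hF 2).trans
      (cs.trans (mul_le_mul_of_nonneg_left q2 hq0))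
  have f2 : Ψ ^ 2 ≤ 2 * D * (D + l) := by
    have : Ψ ^ 2 * S ^ 2 ≤ 2 * D * (D + l) * S ^ 2 := by nlinarith
    exact le_of_mul_le_mul_right this (by positivity)
  have f3 : Ψ ^ 2 / (4 * D) ≤ D + l := by
    rw [div_le_iff₀ (by positivity)]
    nlinarith [mul_nonneg hDpos.le hDl]
  linarith

theorem desai_roy {α : Type*} [Fintype α] [DecidableEq α]
    (G : SimpleGraph α) (D : ℕ) (hD : 1 ≤ D) (hN : 0 < Fintype.card α)
    (hreg : ∀ x : α, (G.neighborSet x).ncard = D)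
    (μ : Fin (Fintype.card α) → ℝ) (hmono : Antitone μ)
    (e : Fin (Fintype.card α) ≃ α)
    (heig : ∀ i, μ i = (adjMat_isHermitian G).eigenvalues (e i))
    (b : Finset α → ℕ)
    (hb : ∀ U : Finset α, IsLeast {k : ℕ | bipartiteAfter (G.induce (↑U : Set α)) k} (b U))
    (Ψ : ℝ)
    (hΨ : IsLeast {r : ℝ | ∃ U : Finset α, U.Nonempty ∧
            r = ((b U : ℝ) + cutCount G U) / U.card} Ψ) :
    -(D : ℝ) + Ψ ^ 2 / (4 * D) ≤ μ ⟨Fintype.card α - 1, by omega⟩ := by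
  rw [heig]
  set j := e ⟨Fintype.card α - 1, by omega⟩
  refine eig_bound G D hD hreg b hb Ψ hΨ
    (((adjMat_isHermitian G).eigenvectorBasis j : EuclideanSpace ℝ α) : α → ℝ) _ ?_
    ((adjMat_isHermitian G).mulVec_eigenvectorBasis j)
  intro h0
  apply (adjMat_isHermitian G).eigenvectorBasis.orthonormal.ne_zero j
  ext u
  exact congrFun h0 u
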